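/- Let m ≥ 2 and let v = 2(b₁,…,b_m) ∈ D_m be a vector such that at least two of the b_i are nonzero, b₁+⋯+b_m is odd, and gcd(b₁,…,b_m) = 1. Let M := {x ∈ D_m : (x,v) = 0}, a lattice of rank m−1 with the form induced from the Euclidean form on ℤᵐ. Then the pullback θ_{D_m}|_{v^⊥}, i.e. the restriction of the theta-product θ_{D_m}(τ,z₁,…,z_m) = θ(τ,z₁)⋯θ(τ,z_m) to the hyperplane {𝔷 ∈ ℂᵐ : b₁z₁+⋯+b_mz_m = 0} = M⊗ℂ, is not identically zero and is a holomorphic Jacobi cusp form of weight m/2 and index 1 for M with multiplier system v_η^{3m}, whose order is Ord(θ_{D_m}|_{v^⊥}) = 1/(v,v) = 1/(4(b₁²+⋯+b_m²)) > 0. -/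

import Mathlib

open Complex Matrix
open scoped Real BigOperators Classical

noncomputable section

abbrev SL2Z := Matrix.SpecialLinearGroup (Fin 2) ℤ

/-- The integral bilinear form attached to a Gram matrix `S`. -/
def bilinZ {ι : Type*} [Fintype ι] (S : Matrix ι ι ℤ) (x y : ι → ℤ) : ℤ :=
  ∑ i, ∑ j, x i * S i j * y j

def bilinQ {ι : Type*} [Fintype ι] (S : Matrix ι ι ℤ) (x y : ι → ℚ) : ℚ :=
  ∑ i, ∑ j, x i * (S i j : ℚ) * y j

def bilinR {ι : Type*} [Fintype ι] (S : Matrix ι ι ℤ) (x y : ι → ℝ) : ℝ :=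
  ∑ i, ∑ j, x i * (S i j : ℝ) * y j

def bilinC {ι : Type*} [Fintype ι] (S : Matrix ι ι ℤ) (x y : ι → ℂ) : ℂ :=
  ∑ i, ∑ j, x i * (S i j : ℂ) * y j

/-- `S` is the Gram matrix of an even positive definite lattice. -/
structure IsEvenPosDef {ι : Type*} [Fintype ι] (S : Matrix ι ι ℤ) : Prop where
  symm : S.IsSymm
  posdef : ∀ x : ι → ℚ, x ≠ 0 → 0 < bilinQ S x x
  even_diag : ∀ i, (2 : ℤ) ∣ S i i

/-- `l ∈ (1/2) L^∨`, written in lattice coordinates:  `2(l,x) ∈ ℤ` for every lattice vector. -/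
def InHalfDual {ι : Type*} [Fintype ι] (S : Matrix ι ι ℤ) (l : ι → ℚ) : Prop :=
  ∀ x : ι → ℤ, ∃ m : ℤ, 2 * bilinQ S l (fun i => (x i : ℚ)) = m

/-- `φ` is a holomorphic Jacobi form of weight `k` and index `t` for the lattice `(ℤ^ι, S)`
with `SL₂(ℤ)`-character (multiplier system) `χ`, Heisenberg character `ν`,
and Fourier coefficients `f`. -/
structure IsJacobiForm {ι : Type*} [Fintype ι] (S : Matrix ι ι ℤ) (k t : ℚ)
    (χ : SL2Z → ℂ) (ν : (ι → ℤ) → (ι → ℤ) → ℂ)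
    (f : ℚ × (ι → ℚ) → ℂ) (φ : ℂ → (ι → ℂ) → ℂ) : Prop where
  holo : DifferentiableOn ℂ (fun p : ℂ × (ι → ℂ) => φ p.1 p.2) {p | 0 < p.1.im}
  modular : ∀ A : SL2Z, ∀ τ : ℂ, 0 < τ.im → ∀ z : ι → ℂ,
    φ (((A.1 0 0 : ℂ) * τ + (A.1 0 1 : ℂ)) / ((A.1 1 0 : ℂ) * τ + (A.1 1 1 : ℂ)))
        (fun i => z i / ((A.1 1 0 : ℂ) * τ + (A.1 1 1 : ℂ)))
      = χ A * ((A.1 1 0 : ℂ) * τ + (A.1 1 1 : ℂ)) ^ (k : ℂ)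
        * Complex.exp ((π : ℂ) * I * (t : ℂ) * (A.1 1 0 : ℂ) * bilinC S z z
            / ((A.1 1 0 : ℂ) * τ + (A.1 1 1 : ℂ)))
        * φ τ z
  elliptic : ∀ x y : ι → ℤ, ∀ τ : ℂ, 0 < τ.im → ∀ z : ι → ℂ,
    φ τ (fun i => z i + (x i : ℂ) * τ + (y i : ℂ))
      = ν x y * Complex.exp (-((π : ℂ) * I * (t : ℂ))
            * ((bilinZ S x x : ℂ) * τ + 2 * bilinC S (fun i => (x i : ℂ)) z))
        * φ τ z
  support : ∀ p : ℚ × (ι → ℚ), f p ≠ 0 →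
    0 ≤ p.1 ∧ InHalfDual S p.2 ∧ 0 ≤ 2 * p.1 * t - bilinQ S p.2 p.2
  expansion : ∀ τ : ℂ, 0 < τ.im → ∀ z : ι → ℂ,
    HasSum (fun p : ℚ × (ι → ℚ) =>
        f p * Complex.exp (2 * (π : ℂ) * I *
          ((p.1 : ℂ) * τ + bilinC S (fun i => (p.2 i : ℂ)) z))) (φ τ z)

/-- The Fourier coefficients `f` are supported on indices of positive hyperbolic norm
(cusp form condition). -/
def IsCuspSupport {ι : Type*} [Fintype ι] (S : Matrix ι ι ℤ) (t : ℚ)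
    (f : ℚ × (ι → ℚ) → ℂ) : Prop :=
  ∀ p : ℚ × (ι → ℚ), f p ≠ 0 → 0 < 2 * p.1 * t - bilinQ S p.2 p.2

/-- `c` is a root of unity. -/
def HasFiniteOrder (c : ℂ) : Prop := ∃ N : ℕ, 0 < N ∧ c ^ N = 1

/-- The quadratic character mod 4. -/
def chi4 (n : ℤ) : ℂ := if n % 4 = 1 then 1 else if n % 4 = 3 then -1 else 0

/-- The classical Jacobi theta-series of characteristic `(1/2,1/2)`. -/
def jtheta (τ z : ℂ) : ℂ :=
  ∑' n : ℤ, chi4 n *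
    Complex.exp (2 * (π : ℂ) * I * (((n : ℂ) ^ 2 * τ) / 8 + (n : ℂ) * z / 2))

/-- The Dedekind eta function. -/
def dedekindEta (τ : ℂ) : ℂ :=
  Complex.exp ((π : ℂ) * I * τ / 12) *
    ∏' n : ℕ, (1 - Complex.exp (2 * (π : ℂ) * I * ((n : ℂ) + 1) * τ))

lemma chi4_even {n : ℤ} (h : Even n) : chi4 n = 0 := by
  obtain ⟨k, rfl⟩ := h
  unfold chi4
  rw [if_neg (by omega), if_neg (by omega)]

lemma chi4_ne_zero_iff (n : ℤ) : chi4 n ≠ 0 ↔ Odd n := by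
  rw [← Int.not_even_iff_odd]
  refine ⟨fun h he => h (chi4_even he), fun h => ?_⟩
  rw [Int.not_even_iff] at h
  unfold chi4
  by_cases h1 : n % 4 = 1
  · simp [h1]
  · rw [if_neg h1, if_pos (by omega)]; norm_num

lemma chi4_odd (k : ℤ) : chi4 (2 * k + 1) = cexp (π * I * k) := by
  have h : cexp (π * I * k) = (-1 : ℂ) ^ k := by
    rw [← Complex.exp_pi_mul_I, ← Complex.exp_int_mul]; ring_nf
  rw [h]
  unfold chi4
  rcases Int.even_or_odd k with hk | hk
  · rw [hk.neg_one_zpow]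
    obtain ⟨l, rfl⟩ := hk
    rw [if_pos (by omega)]
  · rw [hk.neg_one_zpow]
    obtain ⟨l, rfl⟩ := hk
    rw [if_neg (by omega), if_pos (by omega)]

def jterm (τ z : ℂ) (n : ℤ) : ℂ := chi4 n *
    Complex.exp (2 * (π : ℂ) * I * (((n : ℂ) ^ 2 * τ) / 8 + (n : ℂ) * z / 2))

def oddEmb (k : ℤ) : ℤ := 2 * k + 1

lemma oddEmb_inj : Function.Injective oddEmb := by
  intro a b h; unfold oddEmb at h; omega

lemma jterm_supp (τ z : ℂ) : ∀ n ∉ Set.range oddEmb, jterm τ z n = 0 := by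
  intro n hn
  have : Even n := by
    rw [← Int.not_odd_iff_even]
    rintro ⟨k, hk⟩
    exact hn ⟨k, hk.symm⟩
  simp [jterm, chi4_even this]

lemma jterm_odd (τ z : ℂ) (k : ℤ) : jterm τ z (oddEmb k) =
    cexp (π * I * (τ / 4 + z)) * jacobiTheta₂_term k (z + τ / 2 + 1 / 2) τ := by
  unfold jterm oddEmb
  rw [chi4_odd, jacobiTheta₂_term, ← Complex.exp_add, ← Complex.exp_add]
  congr 1
  push_cast
  ring

lemma jterm_hasSum {τ : ℂ} (hτ : 0 < τ.im) (z : ℂ) : HasSum (jterm τ z)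
    (cexp (π * I * (τ / 4 + z)) * jacobiTheta₂ (z + τ / 2 + 1 / 2) τ) := by
  rw [← oddEmb_inj.hasSum_iff (jterm_supp τ z)]
  have : jterm τ z ∘ oddEmb = fun k =>
      cexp (π * I * (τ / 4 + z)) * jacobiTheta₂_term k (z + τ / 2 + 1 / 2) τ := by
    funext k; exact jterm_odd τ z k
  rw [this]
  exact (hasSum_jacobiTheta₂_term _ hτ).mul_left _

lemma jtheta_eq {τ : ℂ} (hτ : 0 < τ.im) (z : ℂ) :
    jtheta τ z = cexp (π * I * (τ / 4 + z)) * jacobiTheta₂ (z + τ / 2 + 1 / 2) τ :=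
  (jterm_hasSum hτ z).tsum_eq

lemma jtheta_hasSum {τ : ℂ} (hτ : 0 < τ.im) (z : ℂ) : HasSum (jterm τ z) (jtheta τ z) := by
  rw [jtheta_eq hτ]; exact jterm_hasSum hτ z

lemma jtheta_diff {p : ℂ × ℂ} (hp : 0 < p.1.im) :
    DifferentiableAt ℂ (fun p : ℂ × ℂ => jtheta p.1 p.2) p := by
  have hU : {p : ℂ × ℂ | 0 < p.1.im} ∈ nhds p :=
    (isOpen_lt continuous_const (Complex.continuous_im.comp continuous_fst)).mem_nhds hp
  have h1 : DifferentiableAt ℂ (fun p : ℂ × ℂ => cexp (π * I * (p.1 / 4 + p.2)) *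
      jacobiTheta₂ (p.2 + p.1 / 2 + 1 / 2) p.1) p := by
    refine DifferentiableAt.mul (by fun_prop) ?_
    have h := (hasFDerivAt_jacobiTheta₂ (p.2 + p.1 / 2 + 1 / 2) hp).differentiableAt
    exact DifferentiableAt.comp (g := fun p : ℂ × ℂ => jacobiTheta₂ p.1 p.2)
      (f := fun p : ℂ × ℂ => (p.2 + p.1 / 2 + 1 / 2, p.1)) p h (by fun_prop)
  refine h1.congr_of_eventuallyEq ?_
  filter_upwards [hU] with q hq
  exact jtheta_eq hq _

lemma jtheta_add_one (τ z : ℂ) : jtheta τ (z + 1) = - jtheta τ z := by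
  unfold jtheta
  rw [← tsum_neg]
  congr 1
  funext n
  rcases Int.even_or_odd n with hn | ⟨k, rfl⟩
  · simp [chi4_even hn]
  · rw [← mul_neg]
    congr 1
    have : 2 * (π : ℂ) * I * (((2 * k + 1 : ℤ) : ℂ) ^ 2 * τ / 8 + ((2 * k + 1 : ℤ) : ℂ) * (z + 1) / 2)
      = 2 * (π : ℂ) * I * (((2 * k + 1 : ℤ) : ℂ) ^ 2 * τ / 8 + ((2 * k + 1 : ℤ) : ℂ) * z / 2)
        + π * I + k * (2 * π * I) := by push_cast; ring
    rw [this, Complex.exp_add, Complex.exp_add, Complex.exp_pi_mul_I, Complex.exp_int_mul_two_pi_mul_I]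
    ring

lemma jtheta_add_tau {τ : ℂ} (hτ : 0 < τ.im) (z : ℂ) :
    jtheta τ (z + τ) = - cexp (-(π * I) * (τ + 2 * z)) * jtheta τ z := by
  rw [jtheta_eq hτ, jtheta_eq hτ, show z + τ + τ / 2 + 1 / 2 = (z + τ / 2 + 1 / 2) + τ by ring,
    jacobiTheta₂_add_left']
  have : - cexp (-(π * I) * (τ + 2 * z)) = cexp (-(π * I) * (τ + 2 * z) - π * I) := by
    rw [sub_eq_add_neg, Complex.exp_add, Complex.exp_neg, Complex.exp_pi_mul_I]; norm_num
  rw [this, ← mul_assoc, ← mul_assoc, ← Complex.exp_add, ← Complex.exp_add]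
  congr 2
  ring

lemma jtheta_T {τ : ℂ} (z : ℂ) : jtheta (τ + 1) z = cexp (π * I / 4) * jtheta τ z := by
  unfold jtheta
  rw [← tsum_mul_left]
  congr 1
  funext n
  rcases Int.even_or_odd n with hn | ⟨k, rfl⟩
  · simp [chi4_even hn]
  · rw [mul_left_comm]
    congr 1
    obtain ⟨l, hl⟩ := Int.even_mul_succ_self k
    have hl' : (k : ℂ) * (k + 1) = l + l := by exact_mod_cast hl
    rw [← Complex.exp_add, Complex.exp_eq_exp_iff_exists_int]
    refine ⟨l, ?_⟩
    push_cast
    linear_combination (π * I) * hl'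

lemma jtheta_S {τ : ℂ} (hτ : 0 < τ.im) (z : ℂ) : jtheta (-1 / τ) (z / τ) =
    -I * (-I * τ) ^ (1 / 2 : ℂ) * cexp (π * I * z ^ 2 / τ) * jtheta τ z := by
  have h0 : τ ≠ 0 := by rintro rfl; simp at hτ
  have hS : 0 < (-1 / τ).im := by
    have := UpperHalfPlane.im_inv_neg_coe_pos ⟨τ, hτ⟩
    simpa [neg_div, inv_neg] using this
  have hc : (-I * τ) ^ (1 / 2 : ℂ) ≠ 0 := by
    rw [Ne, Complex.cpow_eq_zero_iff]; simp [h0]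
  have key := jacobiTheta₂_functional_equation (z - 1 / 2 + τ / 2) τ
  rw [jtheta_eq hτ, jtheta_eq hS,
    show z + τ / 2 + 1 / 2 = (z - 1 / 2 + τ / 2) + 1 by ring, jacobiTheta₂_add_left, key,
    show (z - 1 / 2 + τ / 2) / τ = z / τ + -1 / τ / 2 + 1 / 2 by field_simp; ring]
  have hI : -I = cexp (-(π * I / 2)) := by
    rw [Complex.exp_neg, show π * I / 2 = (π / 2 : ℂ) * I by ring, Complex.exp_pi_div_two_mul_I]; simp
  have e : cexp (π * I * (-1 / τ / 4 + z / τ)) = cexp (-(π * I / 2)) * cexp (π * I * z ^ 2 / τ) *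
      cexp (π * I * (τ / 4 + z)) * cexp (-π * I * (z - 1 / 2 + τ / 2) ^ 2 / τ) := by
    rw [← Complex.exp_add, ← Complex.exp_add, ← Complex.exp_add]
    congr 1
    field_simp
    ring
  rw [e, ← hI]
  field_simp
lemma jtheta_add_int (τ z : ℂ) (y : ℤ) : jtheta τ (z + y) = cexp (π * I * y) * jtheta τ z := by
  have hexp : ∀ y : ℤ, cexp (π * I * (y + 1 : ℤ)) = - cexp (π * I * y) := by
    intro y
    rw [show (π : ℂ) * I * (y + 1 : ℤ) = π * I * y + π * I by push_cast; ring, Complex.exp_add,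
      Complex.exp_pi_mul_I]
    ring
  have hstep : ∀ y : ℤ, jtheta τ (z + (y + 1 : ℤ)) = - jtheta τ (z + y) := by
    intro y
    rw [← jtheta_add_one]; congr 1; push_cast; ring
  induction y using Int.induction_on with
  | zero => simp
  | succ n ih => rw [hstep, hexp, ih]; ring
  | pred n ih =>
    have h1 := hstep (-n - 1)
    have h2 := hexp (-n - 1)
    rw [sub_add_cancel] at h1 h2
    rw [h1, h2] at ih
    linear_combination -ih

lemma jtheta_add_int_tau {τ : ℂ} (hτ : 0 < τ.im) (z : ℂ) (x : ℤ) :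
    jtheta τ (z + x * τ) = cexp (π * I * x - π * I * (x ^ 2 * τ + 2 * x * z)) * jtheta τ z := by
  have hexp : ∀ x : ℤ, cexp (π * I * (x + 1 : ℤ) - π * I * ((x + 1 : ℤ) ^ 2 * τ + 2 * (x + 1 : ℤ) * z))
      = - cexp (-(π * I) * (τ + 2 * (z + x * τ))) * cexp (π * I * x - π * I * (x ^ 2 * τ + 2 * x * z)) := by
    intro x
    rw [neg_mul, ← Complex.exp_add, ← neg_one_mul, ← Complex.exp_pi_mul_I, ← Complex.exp_add]
    congr 1; push_cast; ring
  have hstep : ∀ x : ℤ, jtheta τ (z + (x + 1 : ℤ) * τ) =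
      - cexp (-(π * I) * (τ + 2 * (z + x * τ))) * jtheta τ (z + x * τ) := by
    intro x
    rw [← jtheta_add_tau hτ]; congr 1; push_cast; ring
  induction x using Int.induction_on with
  | zero => simp
  | succ n ih => rw [hstep, hexp, ih]; ring
  | pred n ih =>
    have h1 := hstep (-n - 1)
    have h2 := hexp (-n - 1)
    rw [sub_add_cancel] at h1 h2
    rw [h1, h2, mul_assoc] at ih
    exact mul_left_cancel₀ (neg_ne_zero.2 (Complex.exp_ne_zero _)) ih

lemma jtheta_elliptic {τ : ℂ} (hτ : 0 < τ.im) (z : ℂ) (x y : ℤ) :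
    jtheta τ (z + x * τ + y) =
      cexp (π * I * (x + y) - π * I * (x ^ 2 * τ + 2 * x * z)) * jtheta τ z := by
  rw [jtheta_add_int, jtheta_add_int_tau hτ, ← mul_assoc, ← Complex.exp_add]
  congr 2; ring

/-! ### Modularity -/

lemma dedekindEta_eq (τ : ℂ) : dedekindEta τ = ModularForm.eta τ := by
  unfold dedekindEta ModularForm.eta
  simp_rw [ModularForm.eta_q_eq_cexp, Function.Periodic.qParam]
  congr 2
  push_cast
  ring

lemma dedekindEta_ne_zero {τ : ℂ} (hτ : 0 < τ.im) : dedekindEta τ ≠ 0 := by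
  rw [dedekindEta_eq]; exact ModularForm.eta_ne_zero hτ

lemma dedekindEta_T (τ : ℂ) : dedekindEta (τ + 1) = cexp (π * I / 12) * dedekindEta τ := by
  unfold dedekindEta
  rw [← mul_assoc, ← Complex.exp_add]
  congr 1
  · congr 1; ring
  · congr 1; funext n; congr 1
    rw [Complex.exp_eq_exp_iff_exists_int]
    exact ⟨n + 1, by push_cast; ring⟩

lemma dedekindEta_S {τ : ℂ} (hτ : 0 < τ.im) :
    dedekindEta (-1 / τ) = (-I * τ) ^ (1 / 2 : ℂ) * dedekindEta τ := by
  have h := ModularForm.eta_comp_eq_csqrt_I_inv (x := τ) hτ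
  simp only [Function.comp, Pi.smul_apply, Pi.mul_apply, smul_eq_mul] at h
  rw [dedekindEta_eq, dedekindEta_eq, h]
  have h0 : τ ≠ 0 := by rintro rfl; simp at hτ
  have h1 : τ ^ (1 / 2 : ℂ) = I ^ (1 / 2 : ℂ) * (-I * τ) ^ (1 / 2 : ℂ) := by
    have h2 : -I * τ ≠ 0 := by simp [h0]
    have hl : Complex.log (I * (-I * τ)) = Complex.log I + Complex.log (-I * τ) := by
      apply Complex.log_mul I_ne_zero h2
      have : |arg (-I * τ)| < π / 2 := by
        rw [Complex.abs_arg_lt_pi_div_two_iff]; left; simpa using hτ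
      rw [abs_lt] at this
      rw [Complex.arg_I]
      constructor <;> linarith [Real.pi_pos]
    have h3 : I * (-I * τ) = τ := by rw [← mul_assoc]; simp
    rw [h3] at hl
    rw [Complex.cpow_def_of_ne_zero h0, Complex.cpow_def_of_ne_zero I_ne_zero,
      Complex.cpow_def_of_ne_zero h2, ← Complex.exp_add, hl, add_mul]
  have hI : I ^ (1 / 2 : ℂ) ≠ 0 := by
    rw [Ne, Complex.cpow_eq_zero_iff]; simp
  have hs : ∀ x : ℂ, Complex.sqrt x = x ^ (1 / 2 : ℂ) := by intro x; simp [Complex.sqrt]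
  rw [hs, hs, h1]
  field_simp

def jac (A : SL2Z) (τ : ℂ) : ℂ := (A.1 1 0 : ℂ) * τ + (A.1 1 1 : ℂ)
def mob (A : SL2Z) (τ : ℂ) : ℂ := ((A.1 0 0 : ℂ) * τ + (A.1 0 1 : ℂ)) / jac A τ

lemma mob_eq (A : SL2Z) (τ : UpperHalfPlane) : mob A τ = ((A • τ : UpperHalfPlane) : ℂ) := by
  rw [UpperHalfPlane.specialLinearGroup_apply]; simp [mob, jac]

lemma jac_ne_zero (A : SL2Z) {τ : ℂ} (hτ : 0 < τ.im) : jac A τ ≠ 0 := by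
  have := UpperHalfPlane.denom_ne_zero A ⟨τ, hτ⟩
  simpa [UpperHalfPlane.denom, jac] using this

lemma mob_im (A : SL2Z) {τ : ℂ} (hτ : 0 < τ.im) : 0 < (mob A τ).im := by
  have := mob_eq A ⟨τ, hτ⟩
  simp only at this
  rw [this]; exact (A • (⟨τ, hτ⟩ : UpperHalfPlane)).im_pos

lemma det_entries (A : SL2Z) : (A.1 0 0 : ℂ) * A.1 1 1 - A.1 0 1 * A.1 1 0 = 1 := by
  have := A.2; rw [Matrix.det_fin_two] at this; exact_mod_cast this

lemma jac_mul (A B : SL2Z) {τ : ℂ} (hτ : 0 < τ.im) :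
    jac (A * B) τ = jac A (mob B τ) * jac B τ := by
  have h := jac_ne_zero B hτ
  rw [jac.eq_1 A, mob, add_mul, mul_assoc, div_mul_cancel₀ _ h]
  simp [jac, Matrix.mul_apply, Fin.sum_univ_two]
  ring

lemma mob_mul (A B : SL2Z) {τ : ℂ} (hτ : 0 < τ.im) :
    mob (A * B) τ = mob A (mob B τ) := by
  have h := jac_ne_zero B hτ
  have h' := jac_ne_zero A (mob_im B hτ)
  rw [mob.eq_1 (A * B), mob.eq_1 A, jac_mul A B hτ, div_eq_div_iff (mul_ne_zero h' h) h']
  have : ((A.1 0 0 : ℂ) * mob B τ + (A.1 0 1 : ℂ)) * jac B τ =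
      ((A * B).1 0 0 : ℂ) * τ + ((A * B).1 0 1 : ℂ) := by
    rw [mob, add_mul, mul_assoc, div_mul_cancel₀ _ h]
    simp [jac, Matrix.mul_apply, Fin.sum_univ_two]
    ring
  rw [← this]; ring

def cocE (A : SL2Z) (τ z : ℂ) : ℂ := (A.1 1 0 : ℂ) * z ^ 2 / jac A τ

lemma cocE_mul (A B : SL2Z) {τ : ℂ} (hτ : 0 < τ.im) (z : ℂ) :
    cocE (A * B) τ z = cocE A (mob B τ) (z / jac B τ) + cocE B τ z := by
  have h := jac_ne_zero B hτ
  have h' := jac_ne_zero A (mob_im B hτ)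
  have key : ((A * B).1 1 0 : ℂ) * jac B τ =
      (A.1 1 0 : ℂ) + B.1 1 0 * (jac A (mob B τ) * jac B τ) := by
    rw [← jac_mul A B hτ]
    simp [jac, Matrix.mul_apply, Fin.sum_univ_two]
    linear_combination (A.1 1 0 : ℂ) * det_entries B
  unfold cocE
  rw [jac_mul A B hτ]
  field_simp
  linear_combination z ^ 2 * key

def ModRel (A : SL2Z) : Prop := ∀ τ : ℂ, 0 < τ.im → ∀ z : ℂ,
  jtheta (mob A τ) (z / jac A τ) * jac A τ * dedekindEta τ ^ 3 =
    dedekindEta (mob A τ) ^ 3 * cexp (π * I * cocE A τ z) * jtheta τ z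

lemma modRel_one : ModRel 1 := by
  intro τ hτ z
  simp [mob, jac, cocE]; ring

lemma modRel_mul {A B : SL2Z} (hA : ModRel A) (hB : ModRel B) : ModRel (A * B) := by
  intro τ hτ z
  have h1 := hA (mob B τ) (mob_im B hτ) (z / jac B τ)
  have h2 := hB τ hτ z
  have e := dedekindEta_ne_zero (mob_im B hτ)
  rw [cocE_mul A B hτ, mob_mul A B hτ, jac_mul A B hτ, mul_add, Complex.exp_add]
  rw [div_div, mul_comm (jac B τ)] at h1
  apply mul_left_cancel₀ (pow_ne_zero 3 e)
  linear_combination jac B τ * dedekindEta τ ^ 3 * h1 +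
    dedekindEta (mob A (mob B τ)) ^ 3 * cexp (π * I * cocE A (mob B τ) (z / jac B τ)) * h2

lemma modRel_inv {A : SL2Z} (hA : ModRel A) : ModRel A⁻¹ := by
  intro τ hτ z
  have h0 := jac_ne_zero A⁻¹ hτ
  have h1 := hA (mob A⁻¹ τ) (mob_im A⁻¹ hτ) (z / jac A⁻¹ τ)
  have hm := mob_mul A A⁻¹ hτ
  have hj := jac_mul A A⁻¹ hτ
  have hc := cocE_mul A A⁻¹ hτ z
  rw [mul_inv_cancel] at hm hj hc
  have m1 : mob 1 τ = τ := by simp [mob, jac]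
  have j1 : jac 1 τ = 1 := by simp [jac]
  have c1 : cocE 1 τ z = 0 := by simp [cocE]
  rw [m1] at hm; rw [j1] at hj; rw [c1] at hc
  rw [← hm, div_div, mul_comm (jac A⁻¹ τ), ← hj, div_one] at h1
  have he : cexp (π * I * cocE A (mob A⁻¹ τ) (z / jac A⁻¹ τ)) * cexp (π * I * cocE A⁻¹ τ z) = 1 := by
    rw [← Complex.exp_add, ← mul_add, ← hc]; simp
  linear_combination (-jac A⁻¹ τ * cexp (π * I * cocE A⁻¹ τ z)) * h1
   - dedekindEta τ ^ 3 * jtheta (mob A⁻¹ τ) (z / jac A⁻¹ τ) * jac A⁻¹ τ * he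
   - cexp (π * I * cocE A⁻¹ τ z) * dedekindEta (mob A⁻¹ τ) ^ 3 * jtheta τ z * hj

lemma modRel_T : ModRel ModularGroup.T := by
  intro τ hτ z
  have j : jac ModularGroup.T τ = 1 := by simp [jac, ModularGroup.T]
  have mm : mob ModularGroup.T τ = τ + 1 := by simp [mob, jac, ModularGroup.T]
  have c : cocE ModularGroup.T τ z = 0 := by simp [cocE, ModularGroup.T]
  rw [j, mm, c, dedekindEta_T, div_one, jtheta_T, mul_pow, ← Complex.exp_nat_mul]
  have : ((3 : ℕ) : ℂ) * (π * I / 12) = π * I / 4 := by push_cast; ring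
  rw [this]; simp; ring

lemma modRel_S : ModRel ModularGroup.S := by
  intro τ hτ z
  have h0 : τ ≠ 0 := by rintro rfl; simp at hτ
  have j : jac ModularGroup.S τ = τ := by simp [jac, ModularGroup.S]
  have mm : mob ModularGroup.S τ = -1 / τ := by simp [mob, jac, ModularGroup.S]
  have c : cocE ModularGroup.S τ z = z ^ 2 / τ := by simp [cocE, jac, ModularGroup.S]
  rw [j, mm, c, dedekindEta_S hτ, jtheta_S hτ]
  have hs : ((-I * τ) ^ (1 / 2 : ℂ)) ^ 2 = -I * τ := by
    rw [← Complex.cpow_nat_mul]; norm_num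
  rw [← mul_div_assoc]
  linear_combination (-(-I * τ) ^ (1 / 2 : ℂ) * dedekindEta τ ^ 3 * cexp (π * I * z ^ 2 / τ) *
    jtheta τ z) * hs

lemma modRel_all (A : SL2Z) : ModRel A := by
  have hA : A ∈ Subgroup.closure {ModularGroup.S, ModularGroup.T} := by
    rw [SpecialLinearGroup.SL2Z_generators]; trivial
  induction hA using Subgroup.closure_induction with
  | mem x hx =>
    rcases hx with rfl | rfl
    · exact modRel_S
    · exact modRel_T
  | one => exact modRel_one
  | mul x y _ _ hx hy => exact modRel_mul hx hy
  | inv x _ hx => exact modRel_inv hx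

lemma prod_modular (m : ℕ) (A : SL2Z) {τ : ℂ} (hτ : 0 < τ.im) (Z : Fin m → ℂ) (v : ℂ)
    (hv : dedekindEta (mob A τ) ^ (3 * m)
      = v * jac A τ ^ (((3 * m : ℕ) : ℂ) / 2) * dedekindEta τ ^ (3 * m)) :
    ∏ i, jtheta (mob A τ) (Z i / jac A τ) =
      v * jac A τ ^ ((m : ℂ) / 2) * cexp (π * I * (A.1 1 0 : ℂ) * (∑ i, Z i * Z i) / jac A τ)
        * ∏ i, jtheta τ (Z i) := by
  have h0 := jac_ne_zero A hτ
  have e := pow_ne_zero (3 * m) (dedekindEta_ne_zero hτ)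
  have h1 : ∏ i, (jtheta (mob A τ) (Z i / jac A τ) * jac A τ * dedekindEta τ ^ 3) =
      ∏ i, (dedekindEta (mob A τ) ^ 3 * cexp (π * I * cocE A τ (Z i)) * jtheta τ (Z i)) :=
    Finset.prod_congr rfl fun i _ => modRel_all A τ hτ (Z i)
  simp only [Finset.prod_mul_distrib, Finset.prod_const, Finset.card_univ, Fintype.card_fin,
    ← pow_mul, ← Complex.exp_sum] at h1
  rw [hv] at h1
  have hp : jac A τ ^ (((3 * m : ℕ) : ℂ) / 2) = jac A τ ^ m * jac A τ ^ ((m : ℂ) / 2) := by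
    rw [← Complex.cpow_natCast, ← Complex.cpow_add _ _ h0]
    congr 1; push_cast; ring
  have he : ∑ i, π * I * cocE A τ (Z i) =
      π * I * (A.1 1 0 : ℂ) * (∑ i, Z i * Z i) / jac A τ := by
    rw [Finset.mul_sum, Finset.sum_div]
    refine Finset.sum_congr rfl fun i _ => ?_
    unfold cocE; ring
  rw [he, hp] at h1
  apply mul_left_cancel₀ (mul_ne_zero e (pow_ne_zero m h0))
  linear_combination h1
/-! ### Products of series, nonvanishing -/

lemma hasSum_pi_prod (n : ℕ) (f : Fin n → ℤ → ℂ) (a : Fin n → ℂ) (h : ∀ i, HasSum (f i) (a i)) :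
    HasSum (fun k : Fin n → ℤ => ∏ i, f i (k i)) (∏ i, a i) := by
  induction n with
  | zero => simp
  | succ n IH =>
    have ih := IH (fun i => f i.succ) (fun i => a i.succ) (fun i => h i.succ)
    have h0 := h 0
    rw [← (Fin.consEquiv (fun _ : Fin (n + 1) => ℤ)).hasSum_iff, Fin.prod_univ_succ]
    have hs : Summable (fun p : ℤ × (Fin n → ℤ) => f 0 p.1 * ∏ i : Fin n, f i.succ (p.2 i)) :=
      summable_mul_of_summable_norm (f := f 0) (g := fun k : Fin n → ℤ => ∏ i : Fin n, f i.succ (k i))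
        h0.summable.norm ih.summable.norm
    have hh := HasSum.mul (f := f 0) (g := fun k : Fin n → ℤ => ∏ i : Fin n, f i.succ (k i)) h0 ih hs
    have e : (fun k : Fin (n + 1) → ℤ => ∏ i, f i (k i)) ∘ (Fin.consEquiv (fun _ : Fin (n + 1) => ℤ))
        = fun p : ℤ × (Fin n → ℤ) => f 0 p.1 * ∏ i : Fin n, f i.succ (p.2 i) := by
      funext p
      simp [Fin.prod_univ_succ, Fin.consEquiv]
    rw [e]
    exact hh

lemma jtheta_half_ne_zero : jtheta I (1 / 2) ≠ 0 := by
  have hI : 0 < I.im := by simp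
  rw [jtheta_eq hI]
  refine mul_ne_zero (Complex.exp_ne_zero _) ?_
  intro h
  have hs := hasSum_jacobiTheta₂_term (1 / 2 + I / 2 + 1 / 2) hI
  rw [h] at hs
  have hre := Complex.hasSum_re hs
  have ht : ∀ n : ℤ, (jacobiTheta₂_term n (1 / 2 + I / 2 + 1 / 2) I).re
      = Real.exp (-π * n - π * n ^ 2) := by
    intro n
    have : jacobiTheta₂_term n (1 / 2 + I / 2 + 1 / 2) I
        = ((Real.exp (-π * n - π * n ^ 2) : ℝ) : ℂ) := by
      rw [jacobiTheta₂_term, Complex.ofReal_exp, Complex.exp_eq_exp_iff_exists_int]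
      refine ⟨n, ?_⟩
      push_cast
      linear_combination (π * n + π * n ^ 2 : ℂ) * Complex.I_sq
    rw [this, Complex.ofReal_re]
  simp only [ht, Complex.zero_re] at hre
  have := (hasSum_zero_iff_of_nonneg (fun n => (Real.exp_pos _).le)).1 hre
  exact (Real.exp_pos _).ne' (congrFun this 0)

lemma exists_prod_ne_zero {m : ℕ} (c : Fin m → ℂ) (hc : ∀ i, c i ≠ 0) :
    ∃ t : ℂ, ∏ i, jtheta I (t * c i) ≠ 0 := by
  have hI : 0 < I.im := by simp
  have key : ∀ i, ∀ᶠ t in nhdsWithin (0 : ℂ) {0}ᶜ, jtheta I (t * c i) ≠ 0 := by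
    intro i
    have hd : Differentiable ℂ (fun t : ℂ => jtheta I (t * c i)) := by
      intro t
      exact DifferentiableAt.comp (g := fun p : ℂ × ℂ => jtheta p.1 p.2)
        (f := fun t : ℂ => (I, t * c i)) t (jtheta_diff (by simp)) (by fun_prop)
    have ha : AnalyticOnNhd ℂ (fun t : ℂ => jtheta I (t * c i)) Set.univ :=
      hd.differentiableOn.analyticOnNhd isOpen_univ
    by_contra hcon
    have hfr : ∃ᶠ t in nhdsWithin (0 : ℂ) {0}ᶜ, jtheta I (t * c i) = 0 := by
      rw [Filter.not_eventually] at hcon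
      exact hcon.mono fun t ht => not_not.1 ht
    have hz := ha.eqOn_zero_of_preconnected_of_frequently_eq_zero isPreconnected_univ
      (Set.mem_univ 0) hfr
    have := hz (Set.mem_univ (1 / 2 / c i))
    simp only [div_mul_cancel₀ _ (hc i)] at this
    exact jtheta_half_ne_zero this
  obtain ⟨t, ht⟩ := (Filter.eventually_all.2 key).exists
  exact ⟨t, Finset.prod_ne_zero_iff.2 fun i _ => ht i⟩

lemma gram_form {R : Type*} [CommRing R] {m n : ℕ} (B : Matrix (Fin m) (Fin n) ℤ) (x y : Fin n → R) :
    ∑ i, ∑ j, x i * (((B.transpose * B) i j : ℤ) : R) * y j =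
      ∑ r, (B.map (Int.cast : ℤ → R)).mulVec x r * (B.map (Int.cast : ℤ → R)).mulVec y r := by
  simp only [Matrix.mulVec, dotProduct, Matrix.mul_apply, Matrix.transpose_apply, Matrix.map_apply,
    Int.cast_sum, Int.cast_mul, Finset.mul_sum, Finset.sum_mul]
  rw [Finset.sum_comm_cycle]
  refine Finset.sum_congr rfl fun r _ => ?_
  rw [Finset.sum_comm]
  refine Finset.sum_congr rfl fun i _ => Finset.sum_congr rfl fun j _ => ?_
  ring

lemma cast_mulVec {R : Type*} [CommRing R] {m n : ℕ} (B : Matrix (Fin m) (Fin n) ℤ) (x : Fin n → ℤ)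
    (r : Fin m) : (B.map (Int.cast : ℤ → R)).mulVec (fun i => (x i : R)) r = ((B.mulVec x r : ℤ) : R) := by
  simp [Matrix.mulVec, dotProduct]

lemma orth {R : Type*} [CommRing R] {m n : ℕ} (B : Matrix (Fin m) (Fin n) ℤ) (b : Fin m → ℤ)
    (h : ∀ j, ∑ r, B r j * b r = 0) (x : Fin n → R) :
    ∑ r, (b r : R) * (B.map (Int.cast : ℤ → R)).mulVec x r = 0 := by
  simp only [Matrix.mulVec, dotProduct, Matrix.map_apply, Finset.mul_sum]
  rw [Finset.sum_comm]
  refine Finset.sum_eq_zero fun j _ => ?_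
  have : ((∑ r, B r j * b r : ℤ) : R) = 0 := by rw [h]; simp
  push_cast at this
  rw [← zero_mul (x j), ← this, Finset.sum_mul]
  refine Finset.sum_congr rfl fun r _ => ?_
  ring

/-! ### Arithmetic -/

lemma exists_odd_vec {m : ℕ} (b : Fin m → ℤ) (hodd : Odd (∑ i, b i)) (hgcd : Finset.univ.gcd b = 1) :
    ∃ k : Fin m → ℤ, (∀ i, Odd (k i)) ∧ ∑ i, k i * b i = 1 := by
  obtain ⟨g, hg⟩ := Finset.gcd_eq_sum_mul Finset.univ b
  obtain ⟨s, hs⟩ := hodd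
  rw [hgcd] at hg
  refine ⟨fun i => 1 + 2 * (-s * g i), fun i => ⟨-s * g i, by ring⟩, ?_⟩
  have : ∑ i, (1 + 2 * (-s * g i)) * b i = ∑ i, b i + (-2 * s) * ∑ i, b i * g i := by
    rw [Finset.mul_sum, ← Finset.sum_add_distrib]
    exact Finset.sum_congr rfl fun i _ => by ring
  rw [this, hs]
  linear_combination (2 * s) * hg

lemma vec_unique {m : ℕ} (b : Fin m → ℤ) (h2 : ∃ i j : Fin m, i ≠ j ∧ b i ≠ 0 ∧ b j ≠ 0)
    (hodd : Odd (∑ i, b i)) (hgcd : Finset.univ.gcd b = 1) (k k' : Fin m → ℤ)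
    (h1 : ∑ i, k i * b i = 1) (h1' : ∑ i, k' i * b i = 1 ∨ ∑ i, k' i * b i = -1)
    (hx : ∀ i, (∑ j, b j ^ 2) * k i - (∑ j, k j * b j) * b i =
      (∑ j, b j ^ 2) * k' i - (∑ j, k' j * b j) * b i) : k' = k := by
  obtain ⟨i, j, hij, hi, hj⟩ := h2
  have hq2 : 2 ≤ ∑ j, b j ^ 2 := by
    have h3 : ∑ r ∈ {i, j}, b r ^ 2 ≤ ∑ r, b r ^ 2 :=
      Finset.sum_le_sum_of_subset_of_nonneg (Finset.subset_univ _) (fun _ _ _ => sq_nonneg _)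
    rw [Finset.sum_pair hij] at h3
    have := sq_pos_of_ne_zero hi
    have := sq_pos_of_ne_zero hj
    linarith
  rcases h1' with h | h
  · funext i
    have := hx i
    rw [h1, h] at this
    have : (∑ j, b j ^ 2) * k' i = (∑ j, b j ^ 2) * k i := by linarith
    exact mul_left_cancel₀ (by linarith) this
  · exfalso
    have hqodd : Odd (∑ j, b j ^ 2) := by
      have : Even (∑ j, b j ^ 2 - ∑ j, b j) := by
        rw [← Finset.sum_sub_distrib]
        refine Finset.even_sum _ fun r _ => ?_
        have := Int.even_mul_pred_self (b r)
        rwa [show b r ^ 2 - b r = b r * (b r - 1) by ring]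
      have h4 := this.add_odd hodd
      simpa using h4
    have hdvd : ∀ i, (∑ j, b j ^ 2) ∣ b i := by
      intro i
      have hd : (∑ j, b j ^ 2) ∣ b i * 2 := ⟨k i - k' i, by
        have := hx i
        rw [h1, h] at this
        linarith⟩
      have hcop : IsCoprime (∑ j, b j ^ 2) 2 := Int.isCoprime_two_right.2 hqodd
      exact hcop.dvd_of_dvd_mul_right hd
    have := Finset.dvd_gcd (s := Finset.univ) (f := b) (fun i _ => hdvd i)
    rw [hgcd] at this
    have := Int.le_of_dvd one_pos this
    omega

lemma differentiableAt_prod_aux {E : Type*} [NormedAddCommGroup E] [NormedSpace ℂ E] {m : ℕ}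
    (f : Fin m → E → ℂ) (x : E) (h : ∀ i, DifferentiableAt ℂ (f i) x) :
    DifferentiableAt ℂ (fun p => ∏ i, f i p) x := by
  induction m with
  | zero => simp
  | succ n ih =>
    simp only [Fin.prod_univ_succ]
    exact (h 0).mul (ih _ fun i => h i.succ)

/-- Let `v = 2(b₁,…,b_m) ∈ D_m` with at least two nonzero `bᵢ`, odd sum
and coprime entries, and let `M = v^⊥ ∩ D_m` with `ℤ`-basis the columns of `B`. Then
the pullback of `θ_{D_m} = θ(τ,z₁)⋯θ(τ,z_m)` to `M ⊗ ℂ` is a nonzero holomorphic Jacobi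
cusp form of weight `m/2` and index `1` for `M` with multiplier system `v_η^{3m}`, of order
exactly `1/(v,v) = 1/(4(b₁²+⋯+b_m²))`. -/
theorem statement13 (m : ℕ) (hm : 2 ≤ m) (b : Fin m → ℤ)
    (h2 : ∃ i j : Fin m, i ≠ j ∧ b i ≠ 0 ∧ b j ≠ 0)
    (hodd : Odd (∑ i, b i))
    (hgcd : Finset.univ.gcd b = 1)
    (B : Matrix (Fin m) (Fin (m - 1)) ℤ)
    (hinj : Function.Injective fun w : Fin (m - 1) → ℤ => B.mulVec w)
    (hspan : Set.range (fun w : Fin (m - 1) → ℤ => B.mulVec w)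
      = {x : Fin m → ℤ | (2 : ℤ) ∣ ∑ i, x i ∧ ∑ i, x i * (2 * b i) = 0})
    (vη : SL2Z → ℂ)
    (hvη : ∀ A : SL2Z, ∀ τ : ℂ, 0 < τ.im →
      dedekindEta (((A.1 0 0 : ℂ) * τ + (A.1 0 1 : ℂ))
            / ((A.1 1 0 : ℂ) * τ + (A.1 1 1 : ℂ))) ^ (3 * m)
        = vη A * ((A.1 1 0 : ℂ) * τ + (A.1 1 1 : ℂ)) ^ (((3 * m : ℕ) : ℂ) / 2)
          * dedekindEta τ ^ (3 * m)) :
    (∃ (τ : ℂ) (w : Fin (m - 1) → ℂ), 0 < τ.im ∧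
      (∏ i, jtheta τ ((B.map (Int.cast : ℤ → ℂ)).mulVec w i)) ≠ 0) ∧
    ∃ g : ℚ × (Fin (m - 1) → ℚ) → ℂ,
      IsJacobiForm (B.transpose * B) ((m : ℚ) / 2) 1 vη (fun _ _ => 1) g
        (fun τ w => ∏ i, jtheta τ ((B.map (Int.cast : ℤ → ℂ)).mulVec w i)) ∧
      (∀ p, g p ≠ 0 →
        1 / (4 * ∑ i, (b i : ℚ) ^ 2) ≤ 2 * p.1 - bilinQ (B.transpose * B) p.2 p.2) ∧
      (∃ p, g p ≠ 0 ∧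
        2 * p.1 - bilinQ (B.transpose * B) p.2 p.2 = 1 / (4 * ∑ i, (b i : ℚ) ^ 2)) := by
  obtain ⟨i0, j0, hij0, hi0, hj0⟩ := id h2
  set q : ℤ := ∑ i, b i ^ 2 with hq
  have hqpos : 0 < q := by
    have h3 : b i0 ^ 2 ≤ q :=
      Finset.single_le_sum (f := fun i => b i ^ 2) (fun _ _ => sq_nonneg _) (Finset.mem_univ i0)
    have := sq_pos_of_ne_zero hi0
    linarith
  have hqQ : (0 : ℚ) < (q : ℚ) := by exact_mod_cast hqpos
  have hqne : (q : ℚ) ≠ 0 := hqQ.ne'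
  have hqcast : (∑ i, (b i : ℚ) ^ 2) = (q : ℚ) := by rw [hq]; push_cast; rfl
  -- membership facts
  have hmem : ∀ w : Fin (m - 1) → ℤ, (2 : ℤ) ∣ ∑ i, B.mulVec w i ∧
      ∑ i, B.mulVec w i * (2 * b i) = 0 := by
    intro w
    have : B.mulVec w ∈ Set.range (fun w : Fin (m - 1) → ℤ => B.mulVec w) := ⟨w, rfl⟩
    rw [hspan] at this
    exact this
  have hex : ∀ x : Fin m → ℤ, (∑ i, x i * b i = 0) → ∃ w : Fin (m - 1) → ℤ,
      B.mulVec w = fun i => 2 * x i := by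
    intro x hx
    have : (fun i => 2 * x i) ∈ Set.range (fun w : Fin (m - 1) → ℤ => B.mulVec w) := by
      rw [hspan]
      refine ⟨Finset.dvd_sum fun i _ => Dvd.intro _ rfl, ?_⟩
      have : ∑ i, 2 * x i * (2 * b i) = 4 * ∑ i, x i * b i := by
        rw [Finset.mul_sum]; exact Finset.sum_congr rfl fun i _ => by ring
      rw [this, hx]; simp
    exact this
  have hBb : ∀ j, ∑ r, B r j * b r = 0 := by
    intro j
    have h := (hmem (Pi.single j 1)).2
    have h' : ∑ i, B.mulVec (Pi.single j 1) i * (2 * b i) = 2 * ∑ r, B r j * b r := by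
      rw [Finset.mul_sum]
      refine Finset.sum_congr rfl fun i _ => ?_
      simp; ring
    rw [h'] at h
    omega
  -- the projection
  have hproj : ∀ k : Fin m → ℤ, ∃ w : Fin (m - 1) → ℤ,
      B.mulVec w = fun i => 2 * (q * k i - (∑ j, k j * b j) * b i) := by
    intro k
    apply hex
    have : ∑ i, (q * k i - (∑ j, k j * b j) * b i) * b i
        = q * (∑ i, k i * b i) - (∑ j, k j * b j) * ∑ i, b i ^ 2 := by
      rw [Finset.mul_sum, Finset.mul_sum, ← Finset.sum_sub_distrib]
      exact Finset.sum_congr rfl fun i _ => by ring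
    rw [this, ← hq]; ring
  choose wk hwk using hproj
  let lk : (Fin m → ℤ) → (Fin (m - 1) → ℚ) := fun k i => (wk k i : ℚ) / (4 * q)
  have hlk : ∀ k r, (B.map (Int.cast : ℤ → ℚ)).mulVec (lk k) r =
      (k r : ℚ) / 2 - (((∑ j, k j * b j : ℤ) : ℚ) / (2 * q)) * b r := by
    intro k r
    have h1 : lk k = (4 * (q : ℚ))⁻¹ • (fun i => (wk k i : ℚ)) := by
      funext i; simp [lk, div_eq_inv_mul]
    rw [h1, Matrix.mulVec_smul, Pi.smul_apply, cast_mulVec, hwk, smul_eq_mul]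
    push_cast
    field_simp
    ring
  have hlkC : ∀ k r, (B.map (Int.cast : ℤ → ℂ)).mulVec (fun i => ((lk k i : ℚ) : ℂ)) r =
      (k r : ℂ) / 2 - (((∑ j, k j * b j : ℤ) : ℂ) / (2 * q)) * b r := by
    intro k r
    have h := congrArg (fun x : ℚ => (x : ℂ)) (hlk k r)
    have h1 : (((B.map (Int.cast : ℤ → ℚ)).mulVec (lk k) r : ℚ) : ℂ) =
        (B.map (Int.cast : ℤ → ℂ)).mulVec (fun i => ((lk k i : ℚ) : ℂ)) r := by
      simp [Matrix.mulVec, dotProduct]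
    rw [← h1, h]
    push_cast
    ring
  have hnorm : ∀ k, bilinQ (B.transpose * B) (lk k) (lk k) =
      (∑ r, (k r : ℚ) ^ 2) / 4 - ((∑ j, k j * b j : ℤ) : ℚ) ^ 2 / (4 * q) := by
    intro k
    unfold bilinQ
    rw [gram_form]
    simp only [hlk]
    set s : ℤ := ∑ j, k j * b j with hs
    have hsQ : (s : ℚ) = ∑ j, (k j : ℚ) * b j := by rw [hs]; push_cast; rfl
    have : ∑ r, ((k r : ℚ) / 2 - ((s : ℚ) / (2 * q)) * b r) * ((k r : ℚ) / 2 - ((s : ℚ) / (2 * q)) * b r)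
        = (∑ r, (k r : ℚ) ^ 2) / 4 - (s / (2 * q)) * (∑ j, (k j : ℚ) * b j)
          + (s / (2 * q)) ^ 2 * ∑ i, (b i : ℚ) ^ 2 := by
      rw [Finset.mul_sum, Finset.mul_sum, Finset.sum_div, ← Finset.sum_sub_distrib,
        ← Finset.sum_add_distrib]
      exact Finset.sum_congr rfl fun i _ => by ring
    rw [this, ← hsQ, hqcast]
    field_simp
    ring
  let pk : (Fin m → ℤ) → ℚ × (Fin (m - 1) → ℚ) := fun k => ((∑ r, (k r : ℚ) ^ 2) / 8, lk k)
  have hord : ∀ k, 2 * (pk k).1 - bilinQ (B.transpose * B) (pk k).2 (pk k).2 =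
      ((∑ j, k j * b j : ℤ) : ℚ) ^ 2 / (4 * q) := by
    intro k
    simp only [pk]
    rw [hnorm]; ring
  let ck : (Fin m → ℤ) → ℂ := fun k => ∏ i, chi4 (k i)
  have hck : ∀ k, ck k ≠ 0 → ∀ i, Odd (k i) := by
    intro k hk i
    exact (chi4_ne_zero_iff _).1 (Finset.prod_ne_zero_iff.1 hk i (Finset.mem_univ i))
  have hsodd : ∀ k : Fin m → ℤ, (∀ i, Odd (k i)) → Odd (∑ j, k j * b j) := by
    intro k hk
    have : Even (∑ j, k j * b j - ∑ j, b j) := by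
      rw [← Finset.sum_sub_distrib]
      refine Finset.even_sum _ fun r _ => ?_
      rw [show k r * b r - b r = (k r - 1) * b r by ring]
      exact ((hk r).sub_odd odd_one).mul_right _
    have h4 := this.add_odd hodd
    simpa using h4
  let g : ℚ × (Fin (m - 1) → ℚ) → ℂ := fun p => ∑' k : {k // pk k = p}, ck k.1
  have hg : ∀ p, g p ≠ 0 → ∃ k, pk k = p ∧ ∀ i, Odd (k i) := by
    intro p hp
    by_contra hcon
    push Not at hcon
    apply hp
    have : (fun k : {k // pk k = p} => ck k.1) = fun _ => 0 := by
      funext k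
      by_contra hk
      obtain ⟨i, hi⟩ := hcon k.1 k.2
      exact hi (hck k.1 hk i)
    simp only [g]
    rw [this, tsum_zero]
  have hlow : ∀ p, g p ≠ 0 →
      1 / (4 * ∑ i, (b i : ℚ) ^ 2) ≤ 2 * p.1 - bilinQ (B.transpose * B) p.2 p.2 := by
    intro p hp
    obtain ⟨k, rfl, hk⟩ := hg p hp
    rw [hord, hqcast]
    apply div_le_div_of_nonneg_right _ (by positivity)
    have h1 := hsodd k hk
    have h2 : (1 : ℤ) ≤ (∑ j, k j * b j) ^ 2 := by
      have : ∑ j, k j * b j ≠ 0 := by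
        intro h0; rw [h0] at h1; simp at h1
      have := sq_pos_of_ne_zero this
      linarith
    exact_mod_cast h2
  have hCgram : ∀ x y, bilinC (B.transpose * B) x y = ∑ r, (B.map (Int.cast : ℤ → ℂ)).mulVec x r *
      (B.map (Int.cast : ℤ → ℂ)).mulVec y r := fun x y => gram_form B x y
  refine ⟨?_, g, ⟨?_, ?_, ?_, ?_, ?_⟩, hlow, ?_⟩
  · -- nonvanishing
    have hw : ∃ w : Fin (m - 1) → ℂ, ∀ i, (B.map (Int.cast : ℤ → ℂ)).mulVec w i ≠ 0 := by
      have := Module.Dual.exists_forall_ne_zero_of_forall_exists (K := ℂ) (M := Fin (m - 1) → ℂ)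
        (fun i : Fin m => (LinearMap.proj i).comp (Matrix.mulVecLin (B.map (Int.cast : ℤ → ℂ)))) ?_
      · simpa using this
      · intro i
        have hx : ∃ x : Fin m → ℤ, ∑ r, x r * b r = 0 ∧ x i ≠ 0 := by
          have : ∃ j, j ≠ i ∧ b j ≠ 0 := by
            by_cases h : i0 = i
            · exact ⟨j0, fun h' => hij0 (h.trans h'.symm), hj0⟩
            · exact ⟨i0, h, hi0⟩
          obtain ⟨j, hji, hj⟩ := this
          refine ⟨Pi.single i (b j) - Pi.single j (b i), ?_, ?_⟩
          · simp only [Pi.sub_apply, sub_mul, Finset.sum_sub_distrib, Pi.single_apply, ite_mul,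
              zero_mul, Finset.sum_ite_eq', Finset.sum_ite_eq, Finset.mem_univ, if_true]
            ring
          · simp [hji.symm, hj]
        obtain ⟨x, hx, hxi⟩ := hx
        obtain ⟨w, hw⟩ := hex x hx
        refine ⟨fun i => (w i : ℂ), ?_⟩
        simp only [LinearMap.comp_apply, Matrix.mulVecLin_apply, LinearMap.proj_apply]
        rw [cast_mulVec, hw]
        simpa using hxi
    obtain ⟨w, hw⟩ := hw
    obtain ⟨t, ht⟩ := exists_prod_ne_zero _ hw
    refine ⟨I, t • w, by simp, ?_⟩
    simpa [Matrix.mulVec_smul] using ht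
  · -- holomorphy
    intro p hp
    apply DifferentiableAt.differentiableWithinAt
    refine differentiableAt_prod_aux _ _ fun i => ?_
    refine DifferentiableAt.comp (g := fun p : ℂ × ℂ => jtheta p.1 p.2)
      (f := fun p : ℂ × (Fin (m - 1) → ℂ) => (p.1, (B.map (Int.cast : ℤ → ℂ)).mulVec p.2 i)) p
      (jtheta_diff hp) ?_
    simp only [Matrix.mulVec, dotProduct]
    fun_prop
  · -- modularity
    intro A τ hτ z
    have hdiv : ∀ i, (B.map (Int.cast : ℤ → ℂ)).mulVec (fun i => z i / jac A τ) i =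
        (B.map (Int.cast : ℤ → ℂ)).mulVec z i / jac A τ := by
      intro i
      simp only [Matrix.mulVec, dotProduct, Finset.sum_div, mul_div_assoc]
    have h := prod_modular m A hτ ((B.map (Int.cast : ℤ → ℂ)).mulVec z) (vη A) (hvη A τ hτ)
    rw [hCgram]
    simp only [← hdiv] at h
    have hk : (((m : ℚ) / 2 : ℚ) : ℂ) = (m : ℂ) / 2 := by push_cast; rfl
    rw [hk, Rat.cast_one, mul_one]
    exact h
  · -- elliptic
    intro x y τ hτ z
    have hlin : ∀ i, (B.map (Int.cast : ℤ → ℂ)).mulVec (fun i => z i + (x i : ℂ) * τ + (y i : ℂ)) i =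
        (B.map (Int.cast : ℤ → ℂ)).mulVec z i + ((B.mulVec x i : ℤ) : ℂ) * τ
          + ((B.mulVec y i : ℤ) : ℂ) := by
      intro i
      rw [← cast_mulVec, ← cast_mulVec]
      simp only [Matrix.mulVec, dotProduct, Finset.sum_mul, ← Finset.sum_add_distrib]
      exact Finset.sum_congr rfl fun i _ => by ring
    have hZ : ((bilinZ (B.transpose * B) x x : ℤ) : ℂ) = ∑ r, ((B.mulVec x r : ℤ) : ℂ) ^ 2 := by
      have h := gram_form (R := ℤ) B x x
      simp only [Int.cast_id] at h
      unfold bilinZ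
      rw [h]
      push_cast
      refine Finset.sum_congr rfl fun r _ => ?_
      simp [Matrix.mulVec, dotProduct, sq]
    simp only [hlin, jtheta_elliptic hτ]
    rw [Finset.prod_mul_distrib, ← Complex.exp_sum, hZ, hCgram]
    congr 1
    rw [one_mul, Complex.exp_eq_exp_iff_exists_int]
    obtain ⟨s1, hs1⟩ := (hmem x).1
    obtain ⟨s2, hs2⟩ := (hmem y).1
    have hs1' : ∑ i, ((B.mulVec x i : ℤ) : ℂ) = 2 * s1 := by exact_mod_cast hs1
    have hs2' : ∑ i, ((B.mulVec y i : ℤ) : ℂ) = 2 * s2 := by exact_mod_cast hs2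
    refine ⟨s1 + s2, ?_⟩
    simp only [cast_mulVec]
    have : ∀ X Y Z : Fin m → ℂ, ∑ i, (π * I * (X i + Y i) - π * I * (X i ^ 2 * τ + 2 * X i * Z i)) =
        π * I * (∑ i, X i + ∑ i, Y i) - π * I * ((∑ i, X i ^ 2) * τ + 2 * ∑ i, X i * Z i) := by
      intro X Y Z
      simp only [Finset.mul_sum, Finset.sum_mul, ← Finset.sum_add_distrib, ← Finset.sum_sub_distrib]
      exact Finset.sum_congr rfl fun i _ => by ring
    rw [this, hs1', hs2', Rat.cast_one]
    push_cast
    ring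
  · -- support
    intro p hp
    have hl := hlow p hp
    have hpos : (0 : ℚ) ≤ 1 / (4 * ∑ i, (b i : ℚ) ^ 2) := by rw [hqcast]; positivity
    refine ⟨?_, ?_, by linarith⟩
    · obtain ⟨k, rfl, hk⟩ := hg p hp
      simp only [pk]
      positivity
    · obtain ⟨k, rfl, hk⟩ := hg p hp
      intro x
      refine ⟨∑ r, k r * B.mulVec x r, ?_⟩
      unfold bilinQ
      rw [gram_form]
      have ho := orth (R := ℚ) B b hBb (fun i => (x i : ℚ))
      simp only [pk, hlk]
      simp only [cast_mulVec] at ho ⊢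
      have : ∀ c : ℚ, 2 * ∑ r, ((k r : ℚ) / 2 - c * b r) * ((B.mulVec x r : ℤ) : ℚ) =
          ∑ r, (k r : ℚ) * ((B.mulVec x r : ℤ) : ℚ)
            - 2 * c * ∑ r, (b r : ℚ) * ((B.mulVec x r : ℤ) : ℚ) := by
        intro c
        simp only [Finset.mul_sum, ← Finset.sum_sub_distrib]
        exact Finset.sum_congr rfl fun i _ => by ring
      rw [this, ho]
      push_cast
      ring
  · -- expansion
    intro τ hτ z
    have hs := hasSum_pi_prod m (fun i => jterm τ ((B.map (Int.cast : ℤ → ℂ)).mulVec z i))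
      (fun i => jtheta τ ((B.map (Int.cast : ℤ → ℂ)).mulVec z i)) (fun i => jtheta_hasSum hτ _)
    let E : ℚ × (Fin (m - 1) → ℚ) → ℂ := fun p => cexp (2 * (π : ℂ) * I *
          ((p.1 : ℂ) * τ + bilinC (B.transpose * B) (fun i => (p.2 i : ℂ)) z))
    have hterm : ∀ k : Fin m → ℤ, ∏ i, jterm τ ((B.map (Int.cast : ℤ → ℂ)).mulVec z i) (k i) =
        ck k * E (pk k) := by
      intro k
      simp only [jterm, Finset.prod_mul_distrib, ← Complex.exp_sum, ck, E]
      congr 2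
      rw [hCgram]
      simp only [pk, hlkC]
      have ho := orth (R := ℂ) B b hBb z
      have : ∀ (c : ℂ) (Z : Fin m → ℂ), ∑ r, ((k r : ℂ) / 2 - c * b r) * Z r =
          ∑ r, (k r : ℂ) * Z r / 2 - c * ∑ r, (b r : ℂ) * Z r := by
        intro c Z
        simp only [Finset.mul_sum, ← Finset.sum_sub_distrib]
        exact Finset.sum_congr rfl fun i _ => by ring
      rw [this, ho, ← Finset.mul_sum, Finset.sum_add_distrib]
      push_cast
      rw [← Finset.sum_div, ← Finset.sum_mul]
      ring
    simp only [hterm] at hs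
    have hs' := (Equiv.sigmaFiberEquiv pk).hasSum_iff.2 hs
    refine hs'.sigma fun p => ?_
    have hsum : Summable (fun k : {k // pk k = p} => ck k.1 * E (pk k.1)) := hs.summable.subtype _
    have heq : (fun k : {k // pk k = p} => ck k.1 * E (pk k.1)) = fun k => ck k.1 * E p := by
      funext k; rw [k.2]
    have h1 := hsum.hasSum
    rw [heq, tsum_mul_right] at h1
    have h2 : (fun c : {k // pk k = p} => ((fun k => ck k * E (pk k)) ∘ (Equiv.sigmaFiberEquiv pk)) ⟨p, c⟩)
        = fun k : {k // pk k = p} => ck k.1 * E p := heq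
    rw [h2]
    exact h1
  · -- the minimum is attained
    obtain ⟨k, hk, hk1⟩ := exists_odd_vec b hodd hgcd
    refine ⟨pk k, ?_, ?_⟩
    · have huniq : ∀ k' : {k' // pk k' = pk k}, k'.1 = k := by
        rintro ⟨k', hk'⟩
        have h1 := hord k'
        have h2' := hord k
        rw [hk', h2', hk1] at h1
        have h3 : (∑ j, k' j * b j) ^ 2 = 1 := by
          have : ((∑ j, k' j * b j : ℤ) : ℚ) ^ 2 = 1 := by
            field_simp at h1
            rw [← h1]; simp
          exact_mod_cast this
        have hl : lk k' = lk k := congrArg Prod.snd hk'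
        have hw : wk k' = wk k := by
          funext i
          have := congrFun hl i
          simp only [lk] at this
          field_simp at this
          exact_mod_cast this
        have hB := hwk k
        rw [← hw, hwk k'] at hB
        refine vec_unique b h2 hodd hgcd k k' hk1 (by
          have : (∑ j, k' j * b j) ^ 2 = 1 ^ 2 := by rw [h3]; norm_num
          exact sq_eq_sq_iff_eq_or_eq_neg.1 this) ?_
        intro i
        have := congrFun hB i
        rw [← hq]
        linarith
      have : g (pk k) = ck k := by
        simp only [g]
        rw [tsum_eq_single (⟨k, rfl⟩ : {k' // pk k' = pk k})]
        intro k' hne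
        exact absurd (Subtype.ext (huniq k')) hne
      rw [this]
      exact Finset.prod_ne_zero_iff.2 fun i _ => (chi4_ne_zero_iff _).2 (hk i)
    · rw [hord, hk1, hqcast]; simp
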